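/- For every integer L ≥ 0, ∑_{n≥0} q^{n²} [L−n choose n]_q = ∑_{j∈ℤ} ( q^{j(10j+1)} [L; 5j]_2 − q^{(2j+1)(5j+2)} [L; 5j+2]_2 ), where [L; a]_2 := [L, a; a]_2 is the q-trinomial coefficient. -/

import Mathlib

open Finset

/-- The variable `q`, realized as the generator of the field of rational functions over `ℚ`. -/
noncomputable def qq : RatFunc ℚ := RatFunc.X

/-- `(x)_n = ∏_{j=1}^n (1 - x^j)`. -/
noncomputable def qPoch (x : RatFunc ℚ) (n : ℕ) : RatFunc ℚ :=
  ∏ j ∈ Finset.range n, (1 - x ^ (j + 1))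

/-- Gaussian binomial coefficient `[n choose k]_x`, zero unless `0 ≤ k ≤ n`. -/
noncomputable def qBin (x : RatFunc ℚ) (n k : ℤ) : RatFunc ℚ :=
  if 0 ≤ k ∧ k ≤ n then qPoch x n.toNat / (qPoch x k.toNat * qPoch x (n - k).toNat) else 0

/-- The `q`-trinomial coefficient `[L, b; a]_2` in base `x`. -/
noncomputable def qTri (x : RatFunc ℚ) (L : ℕ) (b a : ℤ) : RatFunc ℚ :=
  ∑ k ∈ Finset.range (L + 1),
    x ^ ((k : ℤ) * (k + b)) * qBin x (L : ℤ) (k : ℤ) * qBin x ((L : ℤ) - k) ((k : ℤ) + a)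

/-- The `q`-trinomial `T_n(L, a)`, written in terms of `s = q^{1/2}` (so the base is `s^2`):
`T_n(L,a) = ∑ s^{r(r-n)} (s²)_L / ((s²)_{(L-a-r)/2} (s²)_{(L+a-r)/2} (s²)_r)`,
the sum over `r ≥ 0` with `L - a - r` even and `r ≤ L - |a|`; zero for `|a| > L`. -/
noncomputable def qT (s : RatFunc ℚ) (n : ℤ) (L : ℕ) (a : ℤ) : RatFunc ℚ :=
  ∑ r ∈ Finset.range (L + 1),
    if Even ((L : ℤ) - a - r) ∧ (r : ℤ) ≤ (L : ℤ) - |a| then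
      s ^ ((r : ℤ) * ((r : ℤ) - n)) * qPoch (s ^ 2) L /
        (qPoch (s ^ 2) (((L : ℤ) - a - r) / 2).toNat *
          qPoch (s ^ 2) (((L : ℤ) + a - r) / 2).toNat * qPoch (s ^ 2) r)
    else 0

/-- The Cartan matrix of the Lie algebra `A_n`. -/
def cartanA (n : ℕ) (i j : Fin n) : ℤ :=
  if i = j then 2 else if |(i : ℤ) - (j : ℤ)| = 1 then -1 else 0

/-!
Write `T n b a` for the `q`-trinomial coefficient `[n, b; a]_2`. The two Pascal-type recurrences of
`T` show that the Andrews–Baxter combination `V n a = T n a a + q ^ n * T n a (a + 1)` satisfies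
`T (n + 1) a a = V n a + q ^ (n + 1 - a) * T n (a - 1) (a - 1)` and
`T (n + 1) a (a + 1) = T n a a + q ^ (a + 1) * V n (a + 1)`. Together they give the recurrence
`X (n + 2) = X (n + 1) + q ^ (n + 1) * X n` of the left-hand side for `T n a a`, up to two error
terms, one in `T (n + 1) (a - 1) (a - 1)` and one in `V n (a + 1)`. Summed over `a = 5 * j` and over
`a = 5 * j + 2`, the first errors are exchanged by `j ↦ -j`, because `T n (-a) (-a) = T n a a`, and
the second ones by `j ↦ -1 - j`, because `V n (-1 - a) = V n a`; so they cancel in the difference.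
-/

open Function (support)

theorem finsum_int_eq_sum_range {M : Type*} [AddCommMonoid M] {f : ℤ → M} {n : ℕ}
    (hf : support f ⊆ Set.Icc 0 (n : ℤ)) : ∑ᶠ k, f k = ∑ k ∈ range (n + 1), f k := by
  have hf' : support f ⊆ ((range (n + 1)).map Nat.castEmbedding : Finset ℤ) := fun k hk ↦ by
    obtain ⟨hk₀, hkn⟩ := hf hk
    lift k to ℕ using hk₀
    simpa [Nat.lt_succ_iff] using hkn
  rw [finsum_eq_finsetSum_of_support_subset f hf', sum_map]
  rfl

section QAnalogues

variable {K : Type*} [Field K] {q : K}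

theorem one_sub_zpow_ne_zero (hq : ¬IsOfFinOrder q) {n : ℤ} (hn : n ≠ 0) : 1 - q ^ n ≠ 0 :=
  fun h ↦ hq (isOfFinOrder_iff_zpow_eq_one.mpr ⟨n, hn, (sub_eq_zero.mp h).symm⟩)

/-- The `q`-Pochhammer symbol `(q; q)_n` over an arbitrary field, which extends `qPoch`. -/
def qPochhammer (q : K) (n : ℕ) : K :=
  ∏ j ∈ range n, (1 - q ^ (j + 1))

@[simp]
theorem qPochhammer_zero (q : K) : qPochhammer q 0 = 1 :=
  prod_range_zero _

theorem qPochhammer_ne_zero (hq : ¬IsOfFinOrder q) (n : ℕ) : qPochhammer q n ≠ 0 :=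
  prod_ne_zero_iff.mpr fun j _ ↦ by
    exact_mod_cast one_sub_zpow_ne_zero hq (n := (j + 1 : ℕ)) (by omega)

theorem qPochhammer_toNat {n : ℤ} (hn : 0 < n) :
    qPochhammer q n.toNat = qPochhammer q (n - 1).toNat * (1 - q ^ n) := by
  obtain ⟨m, rfl⟩ : ∃ m : ℕ, n = (m + 1 : ℕ) := ⟨(n - 1).toNat, by omega⟩
  rw [Int.toNat_natCast, zpow_natCast, qPochhammer, prod_range_succ]
  congr 2
  simp

/-- The `q`-multinomial coefficient `(q; q)_{k+l+m} / ((q; q)_k (q; q)_l (q; q)_m)`, with value `0`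
when one of the lower indices is negative. The Gaussian binomial coefficient `[n choose k]` is
`qMultinomial q 0 k (n - k)`. -/
def qMultinomial (q : K) (k l m : ℤ) : K :=
  if 0 ≤ k ∧ 0 ≤ l ∧ 0 ≤ m then
    qPochhammer q (k + l + m).toNat /
      (qPochhammer q k.toNat * qPochhammer q l.toNat * qPochhammer q m.toNat)
  else 0

theorem qMultinomial_eq_zero {k l m : ℤ} (h : ¬(0 ≤ k ∧ 0 ≤ l ∧ 0 ≤ m)) :
    qMultinomial q k l m = 0 :=
  if_neg h

theorem qMultinomial_swap_left (q : K) (k l m : ℤ) :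
    qMultinomial q k l m = qMultinomial q l k m := by
  simp only [qMultinomial, add_comm k l, mul_comm (qPochhammer q k.toNat), and_left_comm]

theorem qMultinomial_swap_right (q : K) (k l m : ℤ) :
    qMultinomial q k l m = qMultinomial q k m l := by
  simp only [qMultinomial, add_right_comm k l m, mul_right_comm _ (qPochhammer q l.toNat),
    and_comm (a := 0 ≤ l)]

theorem qMultinomial_rotate (q : K) (k l m : ℤ) :
    qMultinomial q k l m = qMultinomial q m k l := by
  rw [qMultinomial_swap_right, qMultinomial_swap_left]

theorem qMultinomial_zero_zero (hq : ¬IsOfFinOrder q) {m : ℤ} (hm : 0 ≤ m) :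
    qMultinomial q 0 0 m = 1 := by
  simp [qMultinomial, hm, qPochhammer_ne_zero hq]

theorem qMultinomial_zero_mul_qMultinomial_zero (hq : ¬IsOfFinOrder q) (n k l : ℤ) :
    qMultinomial q 0 k (n - k) * qMultinomial q 0 l (n - k - l) =
      qMultinomial q k l (n - k - l) := by
  by_cases h : 0 ≤ k ∧ 0 ≤ l ∧ 0 ≤ n - k - l
  · rw [qMultinomial, qMultinomial, qMultinomial, if_pos (by omega), if_pos (by omega),
      if_pos (by omega)]
    have := qPochhammer_ne_zero hq (n - k).toNat
    rw [show 0 + k + (n - k) = n by ring, show 0 + l + (n - k - l) = n - k by ring,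
      show k + l + (n - k - l) = n by ring, Int.toNat_zero, qPochhammer_zero]
    field_simp
  · rw [qMultinomial_eq_zero h, mul_eq_zero]
    by_cases hl : 0 ≤ l ∧ 0 ≤ n - k - l
    · exact .inl (qMultinomial_eq_zero (by omega))
    · exact .inr (qMultinomial_eq_zero (by omega))

theorem one_sub_zpow_mul_qMultinomial (hq : ¬IsOfFinOrder q) (k l m : ℤ) :
    (1 - q ^ (k + l + m)) * qMultinomial q (k - 1) l m = (1 - q ^ k) * qMultinomial q k l m := by
  by_cases h : 0 < k ∧ 0 ≤ l ∧ 0 ≤ m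
  · rw [qMultinomial, qMultinomial, if_pos (by omega), if_pos (by omega),
      qPochhammer_toNat (by omega : 0 < k + l + m), qPochhammer_toNat h.1,
      show k - 1 + l + m = k + l + m - 1 by ring]
    have hk := one_sub_zpow_ne_zero hq h.1.ne'
    have hk' := qPochhammer_ne_zero hq (k - 1).toNat
    field_simp
  · rw [qMultinomial_eq_zero (by omega), mul_zero]
    obtain rfl | hk := eq_or_ne k 0
    · simp
    · rw [qMultinomial_eq_zero (by omega), mul_zero]

theorem qMultinomial_pascal (hq₀ : q ≠ 0) (hq : ¬IsOfFinOrder q) {k l m : ℤ}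
    (h : ¬(k = 0 ∧ l = 0 ∧ m = 0)) :
    qMultinomial q k l m = qMultinomial q k l (m - 1) + q ^ m * qMultinomial q (k - 1) l m +
      q ^ (m + k) * qMultinomial q k (l - 1) m := by
  obtain hn | hn := eq_or_ne (k + l + m) 0
  · rw [qMultinomial_eq_zero, qMultinomial_eq_zero, qMultinomial_eq_zero, qMultinomial_eq_zero]
    · simp
    all_goals omega
  have hk := one_sub_zpow_mul_qMultinomial hq k l m
  have hl : (1 - q ^ (k + l + m)) * qMultinomial q k (l - 1) m =
      (1 - q ^ l) * qMultinomial q k l m := by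
    rw [qMultinomial_swap_left q k, qMultinomial_swap_left q k, add_comm k l,
      one_sub_zpow_mul_qMultinomial hq]
  have hm : (1 - q ^ (k + l + m)) * qMultinomial q k l (m - 1) =
      (1 - q ^ m) * qMultinomial q k l m := by
    rw [qMultinomial_rotate q k l, qMultinomial_rotate q k l, add_comm (k + l), ← add_assoc,
      one_sub_zpow_mul_qMultinomial hq]
  apply mul_left_cancel₀ (one_sub_zpow_ne_zero hq hn)
  simp only [zpow_add₀ hq₀] at hk hl hm ⊢
  linear_combination -hm - q ^ m * hk - q ^ m * q ^ k * hl

theorem qMultinomial_pascal' (hq₀ : q ≠ 0) (hq : ¬IsOfFinOrder q) {k l m : ℤ}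
    (h : ¬(k = 0 ∧ l = 0 ∧ m = 0)) :
    qMultinomial q k l m = qMultinomial q k (l - 1) m + q ^ l * qMultinomial q k l (m - 1) +
      q ^ (l + m) * qMultinomial q (k - 1) l m := by
  simp only [qMultinomial_rotate q _ _ m, qMultinomial_rotate q _ _ (m - 1)]
  exact qMultinomial_pascal hq₀ hq (by omega)

/-- The summand of index `k` of the `q`-trinomial coefficient `[n, b; a]_2`. -/
def qTrinomialTerm (q : K) (n : ℕ) (b a k : ℤ) : K :=
  q ^ (k * (k + b)) * qMultinomial q k (k + a) (n - 2 * k - a)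

/-- The `q`-trinomial coefficient `[n, b; a]_2` over an arbitrary field, which extends `qTri`. The
sum is taken over all integers so that its index can be shifted freely. -/
noncomputable def qTrinomial (q : K) (n : ℕ) (b a : ℤ) : K :=
  ∑ᶠ k : ℤ, qTrinomialTerm q n b a k

theorem support_qTrinomialTerm_subset (q : K) (n : ℕ) (b a : ℤ) :
    support (qTrinomialTerm q n b a) ⊆ Set.Icc 0 (n : ℤ) := by
  refine Function.support_subset_iff'.mpr fun k hk ↦ ?_
  rw [Set.mem_Icc] at hk
  rw [qTrinomialTerm, qMultinomial_eq_zero (by omega), mul_zero]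

@[fun_prop]
theorem hasFiniteSupport_qTrinomialTerm (q : K) (n : ℕ) (b a : ℤ) :
    (qTrinomialTerm q n b a).HasFiniteSupport :=
  (Set.finite_Icc _ _).subset (support_qTrinomialTerm_subset q n b a)

@[fun_prop]
theorem hasFiniteSupport_qTrinomialTerm_sub (q : K) (n : ℕ) (b a d : ℤ) :
    (fun k ↦ qTrinomialTerm q n b a (k - d)).HasFiniteSupport :=
  .fun_comp_of_injective sub_left_injective (by fun_prop)

theorem finsum_qTrinomialTerm_sub (q : K) (n : ℕ) (b a d : ℤ) :
    ∑ᶠ k, qTrinomialTerm q n b a (k - d) = qTrinomial q n b a :=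
  finsum_comp_equiv (Equiv.subRight d)

theorem qTrinomial_eq_sum_range (q : K) (n : ℕ) (b a : ℤ) :
    qTrinomial q n b a = ∑ k ∈ range (n + 1), qTrinomialTerm q n b a k :=
  finsum_int_eq_sum_range (support_qTrinomialTerm_subset q n b a)

theorem qTrinomial_eq_zero {n : ℕ} {a : ℤ} (b : ℤ) (h : a ∉ Set.Icc (-n : ℤ) n) :
    qTrinomial q n b a = 0 := by
  rw [Set.mem_Icc] at h
  refine finsum_eq_zero_of_forall_eq_zero fun k ↦ ?_
  rw [qTrinomialTerm, qMultinomial_eq_zero (by omega), mul_zero]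

theorem qTrinomial_eq_one_of_le_one (hq : ¬IsOfFinOrder q) {n : ℕ} (hn : n ≤ 1) (b : ℤ) :
    qTrinomial q n b 0 = 1 := by
  rw [qTrinomial, finsum_eq_single _ 0 fun k hk ↦ ?_]
  · simp [qTrinomialTerm, qMultinomial_zero_zero hq]
  · rw [qTrinomialTerm, qMultinomial_eq_zero (by omega), mul_zero]

theorem qTrinomial_neg (hq₀ : q ≠ 0) (n : ℕ) (b a : ℤ) :
    qTrinomial q n b (-a) = q ^ (a * (a + b)) * qTrinomial q n (2 * a + b) a := by
  rw [← finsum_qTrinomialTerm_sub _ _ (2 * a + b) _ a, mul_finsum]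
  refine finsum_congr fun k ↦ ?_
  rw [qTrinomialTerm, qTrinomialTerm, qMultinomial_swap_left, ← mul_assoc, ← zpow_add₀ hq₀]
  ring_nf

theorem qTrinomial_neg_neg (hq₀ : q ≠ 0) (n : ℕ) (a : ℤ) :
    qTrinomial q n (-a) (-a) = qTrinomial q n a a := by
  rw [qTrinomial_neg hq₀, add_neg_cancel, mul_zero, zpow_zero, one_mul, two_mul,
    add_neg_cancel_right]

theorem qTrinomial_succ (hq₀ : q ≠ 0) (hq : ¬IsOfFinOrder q) (n : ℕ) (b a : ℤ) :
    qTrinomial q (n + 1) b a = qTrinomial q n b a + q ^ (n + b - a) * qTrinomial q n b (a + 1) +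
      q ^ (n + 1 - a) * qTrinomial q n (b - 1) (a - 1) := by
  have pascal (k : ℤ) : qTrinomialTerm q (n + 1) b a k =
      qTrinomialTerm q n b a k + q ^ (n + b - a) * qTrinomialTerm q n b (a + 1) (k - 1) +
        q ^ (n + 1 - a) * qTrinomialTerm q n (b - 1) (a - 1) k := by
    simp only [qTrinomialTerm]
    rw [qMultinomial_pascal hq₀ hq (by omega)]
    simp only [mul_add, ← mul_assoc, ← zpow_add₀ hq₀]
    push_cast
    ring_nf
  rw [qTrinomial, finsum_congr pascal, finsum_add_distrib (by fun_prop) (by fun_prop),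
    finsum_add_distrib (by fun_prop) (by fun_prop), ← mul_finsum, ← mul_finsum,
    finsum_qTrinomialTerm_sub]
  rfl

theorem qTrinomial_succ' (hq₀ : q ≠ 0) (hq : ¬IsOfFinOrder q) (n : ℕ) (b a : ℤ) :
    qTrinomial q (n + 1) b a = qTrinomial q n b (a - 1) + q ^ a * qTrinomial q n (b + 1) a +
      q ^ (n + 1 + b) * qTrinomial q n (b + 1) (a + 1) := by
  have pascal (k : ℤ) : qTrinomialTerm q (n + 1) b a k =
      qTrinomialTerm q n b (a - 1) k + q ^ a * qTrinomialTerm q n (b + 1) a k +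
        q ^ (n + 1 + b) * qTrinomialTerm q n (b + 1) (a + 1) (k - 1) := by
    simp only [qTrinomialTerm]
    rw [qMultinomial_pascal' hq₀ hq (by omega)]
    simp only [mul_add, ← mul_assoc, ← zpow_add₀ hq₀]
    push_cast
    ring_nf
  rw [qTrinomial, finsum_congr pascal, finsum_add_distrib (by fun_prop) (by fun_prop),
    finsum_add_distrib (by fun_prop) (by fun_prop), ← mul_finsum, ← mul_finsum,
    finsum_qTrinomialTerm_sub]
  rfl

/-- The combination `[n, a; a]_2 + q ^ n [n, a; a + 1]_2` of `q`-trinomial coefficients, whose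
invariance under `a ↦ -1 - a` is the Andrews–Baxter identity. -/
noncomputable def andrewsBaxterSum (q : K) (n : ℕ) (a : ℤ) : K :=
  qTrinomial q n a a + q ^ n * qTrinomial q n a (a + 1)

theorem qTrinomial_succ_self (hq₀ : q ≠ 0) (hq : ¬IsOfFinOrder q) (n : ℕ) (a : ℤ) :
    qTrinomial q (n + 1) a a =
      andrewsBaxterSum q n a + q ^ (n + 1 - a) * qTrinomial q n (a - 1) (a - 1) := by
  rw [qTrinomial_succ hq₀ hq, andrewsBaxterSum, add_sub_cancel_right, zpow_natCast]

theorem qTrinomial_succ_add_one (hq₀ : q ≠ 0) (hq : ¬IsOfFinOrder q) (n : ℕ) (a : ℤ) :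
    qTrinomial q (n + 1) a (a + 1) =
      qTrinomial q n a a + q ^ (a + 1) * andrewsBaxterSum q n (a + 1) := by
  rw [qTrinomial_succ' hq₀ hq, andrewsBaxterSum, add_sub_cancel_right, add_assoc (n : ℤ),
    add_comm (n : ℤ), add_comm 1 a, zpow_add₀ hq₀ (a + 1), zpow_natCast]
  ring

theorem andrewsBaxterSum_succ (hq₀ : q ≠ 0) (hq : ¬IsOfFinOrder q) (n : ℕ) (a : ℤ) :
    andrewsBaxterSum q (n + 1) a =
      andrewsBaxterSum q n a + q ^ (n + 1 - a) * qTrinomial q n (a - 1) (a - 1) +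
        q ^ (n + 1) * (qTrinomial q n a a + q ^ (a + 1) * andrewsBaxterSum q n (a + 1)) := by
  rw [andrewsBaxterSum, qTrinomial_succ_self hq₀ hq, qTrinomial_succ_add_one hq₀ hq]

theorem andrewsBaxterSum_neg_one_sub_eq (hq₀ : q ≠ 0) (n : ℕ) (a : ℤ) :
    andrewsBaxterSum q n (-1 - a) =
      qTrinomial q n (a + 1) (a + 1) + q ^ (n - a) * qTrinomial q n (a - 1) a := by
  rw [andrewsBaxterSum, show -1 - a = -(a + 1) by ring, qTrinomial_neg_neg hq₀,
    show -(a + 1) + 1 = -a by ring, qTrinomial_neg hq₀, ← mul_assoc, ← zpow_natCast,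
    ← zpow_add₀ hq₀]
  ring_nf

theorem andrewsBaxterSum_neg_one_sub (hq₀ : q ≠ 0) (hq : ¬IsOfFinOrder q) (n : ℕ) (a : ℤ) :
    andrewsBaxterSum q n (-1 - a) = andrewsBaxterSum q n a := by
  induction n generalizing a with
  | zero =>
    have h (b : ℤ) : qTrinomial q 0 b 0 = 1 := qTrinomial_eq_one_of_le_one hq zero_le_one b
    rw [andrewsBaxterSum_neg_one_sub_eq hq₀, andrewsBaxterSum]
    obtain rfl | rfl | ⟨ha, ha'⟩ : a = 0 ∨ a = -1 ∨ a ≠ 0 ∧ a ≠ -1 := by omega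
    · simp [h, qTrinomial_eq_zero]
    · simp [h, qTrinomial_eq_zero]
    · rw [qTrinomial_eq_zero, qTrinomial_eq_zero, qTrinomial_eq_zero, qTrinomial_eq_zero]
      · simp
      all_goals simp; omega
  | succ n ih =>
    have neg_sub : andrewsBaxterSum q n (-1 - a + 1) =
        qTrinomial q n (a - 1) (a - 1) + q ^ n * qTrinomial q n (a - 1) a := by
      rw [show -1 - a + 1 = -1 - (a - 1) by ring, ih, andrewsBaxterSum, sub_add_cancel]
    have add_one : andrewsBaxterSum q n (a + 1) = qTrinomial q n (a + 2) (a + 2) +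
        q ^ (n - (a + 1)) * qTrinomial q n a (a + 1) := by
      rw [← ih, andrewsBaxterSum_neg_one_sub_eq hq₀, add_sub_cancel_right,
        show a + 1 + 1 = a + 2 by ring]
    have self := ih a
    rw [andrewsBaxterSum_neg_one_sub_eq hq₀, andrewsBaxterSum] at self
    rw [andrewsBaxterSum_succ hq₀ hq, andrewsBaxterSum_succ hq₀ hq, ih, neg_sub, add_one,
      show -1 - a - 1 = -(a + 2) by ring, show -1 - a = -(a + 1) by ring, qTrinomial_neg_neg hq₀,
      qTrinomial_neg_neg hq₀]
    have := zpow_ne_zero a hq₀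
    simp only [zpow_add₀ hq₀, zpow_sub₀ hq₀, zpow_neg, zpow_natCast, zpow_one] at self ⊢
    field_simp at self ⊢
    linear_combination q ^ (n + 1) * self

theorem qTrinomial_add_two (hq₀ : q ≠ 0) (hq : ¬IsOfFinOrder q) (n : ℕ) (a : ℤ) :
    qTrinomial q (n + 2) a a = qTrinomial q (n + 1) a a + q ^ (n + 1) * qTrinomial q n a a +
      q ^ (n + 2 - a) * qTrinomial q (n + 1) (a - 1) (a - 1) +
      q ^ (n + 2 + a) * andrewsBaxterSum q n (a + 1) := by
  rw [qTrinomial_succ_self hq₀ hq, andrewsBaxterSum, qTrinomial_succ_add_one hq₀ hq, mul_add,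
    ← mul_assoc (q ^ (n + 1)), ← zpow_natCast q (n + 1), ← zpow_add₀ hq₀]
  push_cast
  ring_nf

theorem hasFiniteSupport_mul_qTrinomial {ι : Type*} {a : ι → ℤ} (ha : a.Injective) (c : ι → K)
    (n : ℕ) (b : ι → ℤ) : (fun j ↦ c j * qTrinomial q n (b j) (a j)).HasFiniteSupport := by
  refine ((Set.finite_Icc (-n : ℤ) n).preimage ha.injOn).subset ?_
  refine Function.support_subset_iff'.mpr fun j hj ↦ ?_
  rw [qTrinomial_eq_zero _ hj, mul_zero]

theorem hasFiniteSupport_mul_andrewsBaxterSum {ι : Type*} {a : ι → ℤ} (ha : a.Injective)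
    (c : ι → K) (n : ℕ) : (fun j ↦ c j * andrewsBaxterSum q n (a j)).HasFiniteSupport := by
  simp only [andrewsBaxterSum, mul_add, ← mul_assoc]
  exact (hasFiniteSupport_mul_qTrinomial ha ..).fun_add
    (hasFiniteSupport_mul_qTrinomial ((add_left_injective 1).comp ha) ..)

theorem finsum_mul_qTrinomial_add_two (hq₀ : q ≠ 0) (hq : ¬IsOfFinOrder q) {ι : Type*}
    {a : ι → ℤ} (ha : a.Injective) (c : ι → K) (n : ℕ) :
    ∑ᶠ j, c j * qTrinomial q (n + 2) (a j) (a j) =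
      ∑ᶠ j, c j * qTrinomial q (n + 1) (a j) (a j) +
        q ^ (n + 1) * ∑ᶠ j, c j * qTrinomial q n (a j) (a j) +
        ∑ᶠ j, c j * q ^ (n + 2 - a j) * qTrinomial q (n + 1) (a j - 1) (a j - 1) +
        ∑ᶠ j, c j * q ^ (n + 2 + a j) * andrewsBaxterSum q n (a j + 1) := by
  have hT := hasFiniteSupport_mul_qTrinomial (q := q) ha c (n + 1) a
  have hqT : (fun j ↦ q ^ (n + 1) * (c j * qTrinomial q n (a j) (a j))).HasFiniteSupport :=
    (hasFiniteSupport_mul_qTrinomial ha c n a).mul_right _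
  have hT' := hasFiniteSupport_mul_qTrinomial (q := q) (a := fun j ↦ a j - 1)
    (sub_left_injective.comp ha) (fun j ↦ c j * q ^ (n + 2 - a j)) (n + 1) (fun j ↦ a j - 1)
  have hV := hasFiniteSupport_mul_andrewsBaxterSum (q := q) (a := fun j ↦ a j + 1)
    ((add_left_injective 1).comp ha) (fun j ↦ c j * q ^ (n + 2 + a j)) n
  rw [mul_finsum, ← finsum_add_distrib hT hqT, ← finsum_add_distrib (hT.fun_add hqT) hT',
    ← finsum_add_distrib ((hT.fun_add hqT).fun_add hT') hV]
  refine finsum_congr fun j ↦ ?_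
  rw [qTrinomial_add_two hq₀ hq]
  ring

/-- The left-hand side `∑ q ^ (k ^ 2) [n - k choose k]` of the identity, a `q`-analogue of the
Fibonacci numbers, taken over all integers. -/
noncomputable def fermionicSum (q : K) (n : ℕ) : K :=
  ∑ᶠ k : ℤ, q ^ (k ^ 2) * qMultinomial q 0 k (n - 2 * k)

theorem support_zpow_mul_qMultinomial_subset (q : K) (n : ℕ) :
    support (fun k : ℤ ↦ q ^ (k ^ 2) * qMultinomial q 0 k (n - 2 * k)) ⊆ Set.Icc 0 (n : ℤ) := by
  refine Function.support_subset_iff'.mpr fun k hk ↦ ?_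
  rw [Set.mem_Icc] at hk
  rw [qMultinomial_eq_zero (by omega), mul_zero]

theorem fermionicSum_eq_one_of_le_one (hq : ¬IsOfFinOrder q) {n : ℕ} (hn : n ≤ 1) :
    fermionicSum q n = 1 := by
  rw [fermionicSum, finsum_eq_single _ 0 fun k hk ↦ ?_]
  · simp [qMultinomial_zero_zero hq]
  · rw [qMultinomial_eq_zero (by omega), mul_zero]

theorem fermionicSum_add_two (hq₀ : q ≠ 0) (hq : ¬IsOfFinOrder q) (n : ℕ) :
    fermionicSum q (n + 2) = fermionicSum q (n + 1) + q ^ (n + 1) * fermionicSum q n := by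
  have pascal (k : ℤ) : q ^ (k ^ 2) * qMultinomial q 0 k ((n + 2 : ℕ) - 2 * k) =
      q ^ (k ^ 2) * qMultinomial q 0 k ((n + 1 : ℕ) - 2 * k) +
        q ^ (n + 1) * (q ^ ((k - 1) ^ 2) * qMultinomial q 0 (k - 1) (n - 2 * (k - 1))) := by
    rw [qMultinomial_pascal hq₀ hq (by omega), qMultinomial_eq_zero (k := 0 - 1) (by omega),
      ← zpow_natCast q]
    simp only [mul_zero, add_zero, mul_add, ← mul_assoc, ← zpow_add₀ hq₀]
    push_cast
    ring_nf
  have hfin (m : ℕ) :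
      (fun k : ℤ ↦ q ^ (k ^ 2) * qMultinomial q 0 k (m - 2 * k)).HasFiniteSupport :=
    (Set.finite_Icc _ _).subset (support_zpow_mul_qMultinomial_subset q m)
  have hshift : ∑ᶠ k : ℤ, q ^ ((k - 1) ^ 2) * qMultinomial q 0 (k - 1) (n - 2 * (k - 1)) =
      fermionicSum q n := finsum_comp_equiv (Equiv.subRight (1 : ℤ))
        (f := fun k : ℤ ↦ q ^ (k ^ 2) * qMultinomial q 0 k (n - 2 * k))
  rw [fermionicSum, finsum_congr pascal, finsum_add_distrib (hfin _), ← mul_finsum, hshift]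
  · rfl
  · exact ((hfin n).fun_comp_of_injective (g := (· - 1)) sub_left_injective).mul_right _

/-- The alternating sum of `q`-trinomial coefficients on the right-hand side of the identity, taken
over all integers. -/
noncomputable def bosonicSum (q : K) (n : ℕ) : K :=
  ∑ᶠ j : ℤ, (q ^ (j * (10 * j + 1)) * qTrinomial q n (5 * j) (5 * j) -
    q ^ ((2 * j + 1) * (5 * j + 2)) * qTrinomial q n (5 * j + 2) (5 * j + 2))

theorem injective_five_mul_add (r : ℤ) : (fun j : ℤ ↦ 5 * j + r).Injective :=
  (add_left_injective r).comp (mul_right_injective₀ (by decide))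

theorem bosonicSum_eq_sub (q : K) (n : ℕ) :
    bosonicSum q n =
      ∑ᶠ j : ℤ, q ^ (j * (10 * j + 1)) * qTrinomial q n (5 * j) (5 * j) -
        ∑ᶠ j : ℤ, q ^ ((2 * j + 1) * (5 * j + 2)) * qTrinomial q n (5 * j + 2) (5 * j + 2) :=
  finsum_sub_distrib
    (hasFiniteSupport_mul_qTrinomial (mul_right_injective₀ (by decide)) _ _ _)
    (hasFiniteSupport_mul_qTrinomial (injective_five_mul_add 2) _ _ _)

theorem finsum_mul_qTrinomial_five_mul_sub_one (hq₀ : q ≠ 0) (n : ℕ) :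
    ∑ᶠ j : ℤ, q ^ (j * (10 * j + 1)) * q ^ (n + 2 - 5 * j) *
        qTrinomial q (n + 1) (5 * j - 1) (5 * j - 1) =
      ∑ᶠ j : ℤ, q ^ ((2 * j + 1) * (5 * j + 2)) * q ^ (n + 2 - (5 * j + 2)) *
        qTrinomial q (n + 1) (5 * j + 2 - 1) (5 * j + 2 - 1) := by
  rw [← finsum_comp_equiv (Equiv.neg ℤ)]
  refine finsum_congr fun j ↦ ?_
  rw [Equiv.neg_apply, show 5 * -j - 1 = -(5 * j + 2 - 1) by ring, qTrinomial_neg_neg hq₀,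
    ← zpow_add₀ hq₀, ← zpow_add₀ hq₀]
  ring_nf

theorem finsum_mul_andrewsBaxterSum_five_mul_add_one (hq₀ : q ≠ 0) (hq : ¬IsOfFinOrder q) (n : ℕ) :
    ∑ᶠ j : ℤ, q ^ (j * (10 * j + 1)) * q ^ (n + 2 + 5 * j) *
        andrewsBaxterSum q n (5 * j + 1) =
      ∑ᶠ j : ℤ, q ^ ((2 * j + 1) * (5 * j + 2)) * q ^ (n + 2 + (5 * j + 2)) *
        andrewsBaxterSum q n (5 * j + 2 + 1) := by
  rw [← finsum_comp_equiv (Equiv.subLeft (-1))]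
  refine finsum_congr fun j ↦ ?_
  rw [Equiv.subLeft_apply, show 5 * (-1 - j) + 1 = -1 - (5 * j + 2 + 1) by ring,
    andrewsBaxterSum_neg_one_sub hq₀ hq, ← zpow_add₀ hq₀, ← zpow_add₀ hq₀]
  ring_nf

theorem bosonicSum_add_two (hq₀ : q ≠ 0) (hq : ¬IsOfFinOrder q) (n : ℕ) :
    bosonicSum q (n + 2) = bosonicSum q (n + 1) + q ^ (n + 1) * bosonicSum q n := by
  simp only [bosonicSum_eq_sub]
  rw [finsum_mul_qTrinomial_add_two hq₀ hq (mul_right_injective₀ (by decide)),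
    finsum_mul_qTrinomial_add_two hq₀ hq (injective_five_mul_add 2),
    finsum_mul_qTrinomial_five_mul_sub_one hq₀, finsum_mul_andrewsBaxterSum_five_mul_add_one hq₀ hq]
  ring

theorem bosonicSum_eq_one_of_le_one (hq : ¬IsOfFinOrder q) {n : ℕ} (hn : n ≤ 1) :
    bosonicSum q n = 1 := by
  rw [bosonicSum, finsum_eq_single _ 0 fun j hj ↦ ?_]
  · rw [qTrinomial_eq_zero (a := 5 * 0 + 2) _ (by rw [Set.mem_Icc]; omega)]
    simp [qTrinomial_eq_one_of_le_one hq hn]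
  · rw [qTrinomial_eq_zero _ (by rw [Set.mem_Icc]; omega),
      qTrinomial_eq_zero _ (by rw [Set.mem_Icc]; omega), mul_zero, mul_zero, sub_zero]

theorem fermionicSum_eq_bosonicSum (hq₀ : q ≠ 0) (hq : ¬IsOfFinOrder q) (n : ℕ) :
    fermionicSum q n = bosonicSum q n := by
  induction n using Nat.twoStepInduction with
  | zero => rw [fermionicSum_eq_one_of_le_one hq zero_le_one,
      bosonicSum_eq_one_of_le_one hq zero_le_one]
  | one => rw [fermionicSum_eq_one_of_le_one hq le_rfl, bosonicSum_eq_one_of_le_one hq le_rfl]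
  | more n ih₀ ih₁ => rw [fermionicSum_add_two hq₀ hq, bosonicSum_add_two hq₀ hq, ih₀, ih₁]

theorem fermionicSum_eq_sum_range (q : K) (n : ℕ) :
    fermionicSum q n =
      ∑ k ∈ range (n + 1), q ^ (k ^ 2) * qMultinomial q 0 k ((n : ℤ) - k - k) := by
  rw [fermionicSum, finsum_int_eq_sum_range (support_zpow_mul_qMultinomial_subset q n)]
  refine sum_congr rfl fun k _ ↦ ?_
  rw [sub_sub, ← two_mul, ← zpow_natCast, Nat.cast_pow]

theorem bosonicSum_eq_sum_Icc (q : K) (n : ℕ) :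
    bosonicSum q n = ∑ j ∈ Icc (-(n : ℤ)) (n : ℤ),
      (q ^ (j * (10 * j + 1)) * qTrinomial q n (5 * j) (5 * j) -
        q ^ ((2 * j + 1) * (5 * j + 2)) * qTrinomial q n (5 * j + 2) (5 * j + 2)) := by
  refine finsum_eq_finsetSum_of_support_subset _ (Function.support_subset_iff'.mpr fun j hj ↦ ?_)
  rw [coe_Icc, Set.mem_Icc] at hj
  rw [qTrinomial_eq_zero _ (by rw [Set.mem_Icc]; omega),
    qTrinomial_eq_zero _ (by rw [Set.mem_Icc]; omega), mul_zero, mul_zero, sub_zero]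

theorem stmt11_general (hq₀ : q ≠ 0) (hq : ¬IsOfFinOrder q) (L : ℕ) :
    ∑ n ∈ range (L + 1), q ^ (n ^ 2) * qMultinomial q 0 n ((L : ℤ) - n - n) =
      ∑ j ∈ Icc (-(L : ℤ)) (L : ℤ),
        (q ^ (j * (10 * j + 1)) * qTrinomial q L (5 * j) (5 * j) -
          q ^ ((2 * j + 1) * (5 * j + 2)) * qTrinomial q L (5 * j + 2) (5 * j + 2)) := by
  rw [← fermionicSum_eq_sum_range, ← bosonicSum_eq_sum_Icc, fermionicSum_eq_bosonicSum hq₀ hq]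

end QAnalogues

theorem qBin_eq_qMultinomial (x : RatFunc ℚ) (n k : ℤ) :
    qBin x n k = qMultinomial x 0 k (n - k) := by
  have hcond : (0 ≤ k ∧ k ≤ n) ↔ (0 ≤ (0 : ℤ) ∧ 0 ≤ k ∧ 0 ≤ n - k) := by omega
  simp only [qBin, qMultinomial, hcond, Int.toNat_zero, qPochhammer_zero, one_mul, zero_add,
    add_sub_cancel]
  rfl

theorem qTri_eq_qTrinomial {x : RatFunc ℚ} (hx : ¬IsOfFinOrder x) (L : ℕ) (b a : ℤ) :
    qTri x L b a = qTrinomial x L b a := by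
  rw [qTrinomial_eq_sum_range, qTri]
  refine sum_congr rfl fun k _ ↦ ?_
  rw [qBin_eq_qMultinomial, qBin_eq_qMultinomial, mul_assoc,
    qMultinomial_zero_mul_qMultinomial_zero hx, qTrinomialTerm, two_mul, ← sub_sub, ← sub_sub]

theorem not_isOfFinOrder_ratFunc_X (F : Type*) [Field F] :
    ¬IsOfFinOrder (RatFunc.X : RatFunc F) := fun h ↦ by
  obtain ⟨n, hn, hXn⟩ := h.exists_pow_eq_one
  exact RatFunc.transcendental_X (K := F) (.of_pow hn (hXn ▸ isAlgebraic_one))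

theorem stmt11 (L : ℕ) :
    ∑ n ∈ Finset.range (L + 1), qq ^ (n ^ 2) * qBin qq ((L : ℤ) - n) (n : ℤ) =
      ∑ j ∈ Finset.Icc (-(L : ℤ)) (L : ℤ),
        (qq ^ (j * (10 * j + 1)) * qTri qq L (5 * j) (5 * j) -
          qq ^ ((2 * j + 1) * (5 * j + 2)) * qTri qq L (5 * j + 2) (5 * j + 2)) := by
  have hq : ¬IsOfFinOrder qq := not_isOfFinOrder_ratFunc_X ℚ
  simpa only [qBin_eq_qMultinomial, qTri_eq_qTrinomial hq] using
    stmt11_general (q := qq) RatFunc.X_ne_zero hq L
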